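/- arXiv:2409.15459 — 8 statements merged into one kernel-verified Lean document; each statement's English description precedes it below -/
import Mathlib

section
/- Let κ ≥ 0, λ > 0, and let b : [0,1] → ℝ be a twice continuously differentiable unit trading strategy. Suppose a : [0,1] → ℝ is a twice continuously differentiable unit trading strategy such that Cost_A(a, b) ≤ Cost_A(g, b) for every twice continuously differentiable unit trading strategy g. Then a satisfies the Euler–Lagrange equation a''(t) = −(λ/2)(b''(t) + κ b'(t)) for all t ∈ [0,1]. -/
open Real

/-- The total cost of trader A trading strategy `a` in competition with the
`lam`-scaled strategy `b`, with market impact coefficient `κ`. -/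
noncomputable def costA (κ lam : ℝ) (a b : ℝ → ℝ) : ℝ :=
  ∫ t in (0:ℝ)..1,
    ((deriv a t + lam * deriv b t) * deriv a t + κ * (a t + lam * b t) * deriv a t)

theorem best_response_satisfies_euler_lagrange (κ lam : ℝ) (hκ : 0 ≤ κ) (hlam : 0 < lam)
    (a b : ℝ → ℝ) (hb : ContDiff ℝ 2 b) (hb0 : b 0 = 0) (hb1 : b 1 = 1)
    (ha : ContDiff ℝ 2 a) (ha0 : a 0 = 0) (ha1 : a 1 = 1)
    (hmin : ∀ g : ℝ → ℝ, ContDiff ℝ 2 g → g 0 = 0 → g 1 = 1 →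
      costA κ lam a b ≤ costA κ lam g b) :
    ∀ t ∈ Set.Icc (0:ℝ) 1,
      deriv (deriv a) t = -(lam/2) * (deriv (deriv b) t + κ * deriv b t) := by
  have hBd : ∀ t, HasDerivAt (fun x => ∫ s in (0:ℝ)..x, b s) (b t) t := fun t =>
    intervalIntegral.integral_hasDerivAt_right (hb.continuous.intervalIntegrable _ _)
      hb.continuous.stronglyMeasurable.stronglyMeasurableAtFilter hb.continuous.continuousAt
  obtain ⟨B, hB0, hBd⟩ : ∃ B : ℝ → ℝ, B 0 = 0 ∧ ∀ t, HasDerivAt B (b t) t :=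
    ⟨_, by simp, hBd⟩
  have hda : ∀ t, HasDerivAt a (deriv a t) t := fun t =>
    (ha.differentiable (by norm_num) t).hasDerivAt
  have hdb : ∀ t, HasDerivAt b (deriv b t) t := fun t =>
    (hb.differentiable (by norm_num) t).hasDerivAt
  have ha1' : ContDiff ℝ 1 (deriv a) :=
    (contDiff_succ_iff_deriv (n := 1)).1 (by simpa [one_add_one_eq_two] using ha) |>.2.2
  have hb1' : ContDiff ℝ 1 (deriv b) :=
    (contDiff_succ_iff_deriv (n := 1)).1 (by simpa [one_add_one_eq_two] using hb) |>.2.2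
  have hdda : ∀ t, HasDerivAt (deriv a) (deriv (deriv a) t) t := fun t =>
    (ha1'.differentiable (by norm_num) t).hasDerivAt
  have hddb : ∀ t, HasDerivAt (deriv b) (deriv (deriv b) t) t := fun t =>
    (hb1'.differentiable (by norm_num) t).hasDerivAt
  have hB2 : ContDiff ℝ 2 B := by
    have hBe : deriv B = b := funext fun t => (hBd t).deriv
    have h3 : ContDiff ℝ (1 + 1) B := by
      rw [contDiff_succ_iff_deriv]
      refine ⟨fun t => (hBd t).differentiableAt, by simp, ?_⟩
      rw [hBe]
      exact hb.of_le (by norm_num)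
    simpa [one_add_one_eq_two] using h3
  -- the variation, chosen so that its derivative is the momentum minus a constant
  obtain ⟨c, hc⟩ : ∃ c : ℝ, c = 2 + lam + κ * lam * B 1 := ⟨_, rfl⟩
  obtain ⟨h, hh⟩ : ∃ h : ℝ → ℝ, h = fun t => 2 * a t + lam * b t + κ * lam * B t - c * t :=
    ⟨_, rfl⟩
  obtain ⟨v, hv⟩ : ∃ v : ℝ → ℝ,
    v = fun t => 2 * deriv a t + lam * deriv b t + κ * lam * b t - c := ⟨_, rfl⟩
  have hhC : ContDiff ℝ 2 h := by rw [hh]; fun_prop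
  have hvc : Continuous v := by
    have := ha1'.continuous
    have := hb1'.continuous
    have := hb.continuous
    rw [hv]; fun_prop
  have hh0 : h 0 = 0 := by simp [hh, ha0, hb0, hB0]
  have hh1 : h 1 = 0 := by simp [hh, ha1, hb1, hc]
  have hhd : ∀ t, HasDerivAt h (v t) t := by
    intro t
    rw [hh, hv]
    have := ((((hda t).const_mul 2).add ((hdb t).const_mul lam)).add
      ((hBd t).const_mul (κ * lam))).sub ((hasDerivAt_id t).const_mul c)
    rw [mul_one] at this
    exact this
  obtain ⟨g, hg⟩ : ∃ g : ℝ → ℝ, g = fun t => a t - (1/2) * h t := ⟨_, rfl⟩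
  have hgC : ContDiff ℝ 2 g := by rw [hg]; fun_prop
  have hgd : deriv g = fun t => deriv a t - (1/2) * v t := by
    funext t
    rw [hg]
    exact ((hda t).sub ((hhd t).const_mul (1/2))).deriv
  have key := hmin g hgC (by simp [hg, ha0, hh0]) (by simp [hg, ha1, hh1])
  have cda := ha1'.continuous
  have cdb := hb1'.continuous
  have ca := ha.continuous
  have cb := hb.continuous
  have ch := hhC.continuous
  -- the total derivative part
  have hF : ∀ t, HasDerivAt (fun t => -(c/2) * h t - (κ/2) * (a t * h t) + (κ/8) * (h t * h t))
      (-(c/2) * v t - (κ/2) * (deriv a t * h t + a t * v t)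
        + (κ/8) * (v t * h t + h t * v t)) t := fun t =>
    (((hhd t).const_mul _).sub (((hda t).mul (hhd t)).const_mul _)).add
      (((hhd t).mul (hhd t)).const_mul _)
  have hFc : Continuous (fun t => -(c/2) * v t - (κ/2) * (deriv a t * h t + a t * v t)
        + (κ/8) * (v t * h t + h t * v t)) := by fun_prop
  have hFi := intervalIntegral.integral_eq_sub_of_hasDerivAt (a := (0:ℝ)) (b := 1)
    (fun t _ => hF t) (hFc.intervalIntegrable _ _)
  simp only [hh0, hh1, mul_zero, sub_self, add_zero] at hFi
  have hcost : costA κ lam g b = costA κ lam a b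
      - (1/4) * ∫ t in (0:ℝ)..1, (v t)^2 := by
    have e : costA κ lam g b = costA κ lam a b
        + (∫ t in (0:ℝ)..1, (-(c/2) * v t - (κ/2) * (deriv a t * h t + a t * v t)
        + (κ/8) * (v t * h t + h t * v t))) - (1/4) * ∫ t in (0:ℝ)..1, (v t)^2 := by
      unfold costA
      rw [← intervalIntegral.integral_const_mul, ← intervalIntegral.integral_add,
        ← intervalIntegral.integral_sub]
      · congr 1
        funext t
        have hvt : v t = 2 * deriv a t + lam * deriv b t + κ * lam * b t - c := by rw [hv]
        have hgt : deriv g t = deriv a t - (1/2) * v t := by rw [hgd]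
        have hgt' : g t = a t - (1/2) * h t := by rw [hg]
        have hct : c = 2 * deriv a t + lam * deriv b t + κ * lam * b t - v t := by linarith
        rw [hgt, hgt', hct]
        ring
      all_goals
        apply Continuous.intervalIntegrable
        fun_prop
    rw [e, hFi, add_zero]
  have hle : ∫ t in (0:ℝ)..1, (v t)^2 ≤ 0 := by linarith
  have hv0 : ∀ t ∈ Set.Icc (0:ℝ) 1, v t = 0 := by
    intro t ht
    by_contra hne
    have : 0 < ∫ t in (0:ℝ)..1, (v t)^2 :=
      intervalIntegral.integral_pos one_pos (by fun_prop) (fun x _ => sq_nonneg _)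
        ⟨t, ht, by positivity⟩
    linarith
  intro t ht
  have hvd : HasDerivAt v (2 * deriv (deriv a) t + lam * deriv (deriv b) t
      + κ * lam * deriv b t) t := by
    rw [hv]
    exact ((((hdda t).const_mul 2).add ((hddb t).const_mul lam)).add
      ((hdb t).const_mul (κ * lam))).sub_const c
  have hz : HasDerivWithinAt v 0 (Set.Icc 0 1) t :=
    (hasDerivWithinAt_const t (Set.Icc (0:ℝ) 1) (0:ℝ)).congr hv0 (hv0 t ht)
  have hu := (uniqueDiffOn_Icc (zero_lt_one' ℝ) t ht).eq_deriv _ hvd.hasDerivWithinAt hz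
  linarith
end

section
/- Let κ ≥ 0, λ > 0, and let b : [0,1] → ℝ be a twice continuously differentiable unit trading strategy. Suppose a : [0,1] → ℝ is a twice continuously differentiable unit trading strategy satisfying a''(t) = −(λ/2)(b''(t) + κ b'(t)) for all t ∈ [0,1]. Then a is a global best response to b: for every continuously differentiable unit trading strategy g, Cost_A(a, b) ≤ Cost_A(g, b). -/
open Real

theorem euler_lagrange_implies_best_response (κ lam : ℝ) (hκ : 0 ≤ κ) (hlam : 0 < lam)
    (a b : ℝ → ℝ) (hb : ContDiff ℝ 2 b) (hb0 : b 0 = 0) (hb1 : b 1 = 1)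
    (ha : ContDiff ℝ 2 a) (ha0 : a 0 = 0) (ha1 : a 1 = 1)
    (hEL : ∀ t ∈ Set.Icc (0:ℝ) 1,
      deriv (deriv a) t = -(lam/2) * (deriv (deriv b) t + κ * deriv b t)) :
    ∀ g : ℝ → ℝ, ContDiff ℝ 1 g → g 0 = 0 → g 1 = 1 →
      costA κ lam a b ≤ costA κ lam g b := by
  intro g hg hg0 hg1
  have dg : Differentiable ℝ g := hg.differentiable (by norm_num)
  have da : Differentiable ℝ a := ha.differentiable (by norm_num)
  have db : Differentiable ℝ b := hb.differentiable (by norm_num)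
  have cg' : Continuous (deriv g) := hg.continuous_deriv (by norm_num)
  have ca' : Continuous (deriv a) := ha.continuous_deriv (by norm_num)
  have cb' : Continuous (deriv b) := hb.continuous_deriv (by norm_num)
  have cg := dg.continuous
  have ca := da.continuous
  have cb := db.continuous
  have ha2 : ContDiff ℝ (1 + 1) a := by norm_num; exact ha
  have hb2 : ContDiff ℝ (1 + 1) b := by norm_num; exact hb
  have da' : Differentiable ℝ (deriv a) :=
    ((contDiff_succ_iff_deriv.1 ha2).2.2).differentiable (by norm_num)
  have db' : Differentiable ℝ (deriv b) :=
    ((contDiff_succ_iff_deriv.1 hb2).2.2).differentiable (by norm_num)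
  have key : ∫ t in (0:ℝ)..1, ((deriv g t - deriv a t) *
      (2 * deriv a t + lam * deriv b t + κ * lam * b t)
      + κ * (g t * deriv g t - a t * deriv a t)) = 0 := by
    rw [intervalIntegral.integral_eq_sub_of_hasDerivAt
      (f := fun t => (g t - a t) * (2 * deriv a t + lam * deriv b t + κ * lam * b t)
        + κ / 2 * (g t * g t - a t * a t))]
    · simp [hg0, hg1, ha0, ha1]
    · intro t ht
      rw [Set.uIcc_of_le zero_le_one] at ht
      have hgt := (dg t).hasDerivAt
      have hat := (da t).hasDerivAt
      have hbt := (db t).hasDerivAt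
      have hat' := (da' t).hasDerivAt
      have hbt' := (db' t).hasDerivAt
      refine (((hgt.sub hat).mul (((hat'.const_mul 2).add (hbt'.const_mul lam)).add
        (hbt.const_mul (κ * lam)))).add
        (((hgt.mul hgt).sub (hat.mul hat)).const_mul (κ / 2))).congr_deriv ?_
      simp only [Pi.add_apply, Pi.sub_apply, hEL t ht]
      ring
    · exact Continuous.intervalIntegrable (by fun_prop) _ _
  have hsq : 0 ≤ ∫ t in (0:ℝ)..1, (deriv g t - deriv a t) ^ 2 :=
    intervalIntegral.integral_nonneg zero_le_one (fun t _ => sq_nonneg _)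
  have e : costA κ lam g b = costA κ lam a b
      + (∫ t in (0:ℝ)..1, ((deriv g t - deriv a t) *
      (2 * deriv a t + lam * deriv b t + κ * lam * b t)
      + κ * (g t * deriv g t - a t * deriv a t)))
      + ∫ t in (0:ℝ)..1, (deriv g t - deriv a t) ^ 2 := by
    unfold costA
    rw [← intervalIntegral.integral_add, ← intervalIntegral.integral_add]
    · congr 1
      funext t
      ring
    all_goals exact Continuous.intervalIntegrable (by fun_prop) _ _
  rw [e, key]
  linarith
end

section
/- Let κ ≥ 0, λ > 0, and let b : [0,1] → ℝ be a twice continuously differentiable unit trading strategy. If a₁ and a₂ are twice continuously differentiable unit trading strategies each of which minimizes Cost_A(·, b) over all twice continuously differentiable unit trading strategies, then a₁(t) = a₂(t) for all t ∈ [0,1]; i.e., the best response to b is unique. -/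
open Real

theorem best_response_unique (κ lam : ℝ) (hκ : 0 ≤ κ) (hlam : 0 < lam)
    (b : ℝ → ℝ) (hb : ContDiff ℝ 2 b) (hb0 : b 0 = 0) (hb1 : b 1 = 1)
    (a₁ a₂ : ℝ → ℝ)
    (ha₁ : ContDiff ℝ 2 a₁) (ha₁0 : a₁ 0 = 0) (ha₁1 : a₁ 1 = 1)
    (ha₂ : ContDiff ℝ 2 a₂) (ha₂0 : a₂ 0 = 0) (ha₂1 : a₂ 1 = 1)
    (hmin₁ : ∀ g : ℝ → ℝ, ContDiff ℝ 2 g → g 0 = 0 → g 1 = 1 →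
      costA κ lam a₁ b ≤ costA κ lam g b)
    (hmin₂ : ∀ g : ℝ → ℝ, ContDiff ℝ 2 g → g 0 = 0 → g 1 = 1 →
      costA κ lam a₂ b ≤ costA κ lam g b) :
    ∀ t ∈ Set.Icc (0:ℝ) 1, a₁ t = a₂ t := by
  have h1 : (1:WithTop ℕ∞) ≤ 2 := by norm_num
  have d₁ : Differentiable ℝ a₁ := ha₁.differentiable (by norm_num)
  have d₂ : Differentiable ℝ a₂ := ha₂.differentiable (by norm_num)
  have c₁ : Continuous (deriv a₁) := ha₁.continuous_deriv h1
  have c₂ : Continuous (deriv a₂) := ha₂.continuous_deriv h1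
  have cb : Continuous (deriv b) := hb.continuous_deriv h1
  have k₁ : Continuous a₁ := ha₁.continuous
  have k₂ : Continuous a₂ := ha₂.continuous
  have kb : Continuous b := hb.continuous
  set m : ℝ → ℝ := fun t => (a₁ t + a₂ t) / 2 with hm
  have hmC : ContDiff ℝ 2 m := (ha₁.add ha₂).div_const 2
  have hm' : ∀ t, deriv m t = (deriv a₁ t + deriv a₂ t) / 2 := fun t =>
    (((d₁ t).hasDerivAt.add (d₂ t).hasDerivAt).div_const 2).deriv
  have e1 := hmin₁ m hmC (by simp [hm, ha₁0, ha₂0]) (by simp only [hm, ha₁1, ha₂1]; norm_num)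
  have e2 := hmin₂ m hmC (by simp [hm, ha₁0, ha₂0]) (by simp only [hm, ha₁1, ha₂1]; norm_num)
  have km : Continuous m := hmC.continuous
  have cm : Continuous (deriv m) := hmC.continuous_deriv h1
  have hdd : ∫ t in (0:ℝ)..1, (a₁ t - a₂ t) * (deriv a₁ t - deriv a₂ t) = 0 := by
    have : ∀ t ∈ Set.uIcc (0:ℝ) 1, HasDerivAt (fun t => (a₁ t - a₂ t) ^ 2 / 2)
        ((a₁ t - a₂ t) * (deriv a₁ t - deriv a₂ t)) t := by
      intro t _
      have h := ((((d₁ t).hasDerivAt.sub (d₂ t).hasDerivAt).pow 2).div_const 2)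
      refine h.congr_deriv ?_
      simp only [Pi.sub_apply]
      norm_num
      ring
    rw [intervalIntegral.integral_eq_sub_of_hasDerivAt this
      (Continuous.intervalIntegrable (by fun_prop) _ _)]
    simp [ha₁0, ha₂0, ha₁1, ha₂1]
  have key : costA κ lam a₁ b + costA κ lam a₂ b - 2 * costA κ lam m b
      = 1 / 2 * (∫ t in (0:ℝ)..1, (deriv a₁ t - deriv a₂ t) ^ 2)
        + κ / 2 * ∫ t in (0:ℝ)..1, (a₁ t - a₂ t) * (deriv a₁ t - deriv a₂ t) := by
    unfold costA
    rw [← intervalIntegral.integral_const_mul, ← intervalIntegral.integral_const_mul,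
      ← intervalIntegral.integral_const_mul,
      ← intervalIntegral.integral_add (Continuous.intervalIntegrable (by fun_prop) _ _)
        (Continuous.intervalIntegrable (by fun_prop) _ _),
      ← intervalIntegral.integral_sub (Continuous.intervalIntegrable (by fun_prop) _ _)
        (Continuous.intervalIntegrable (by fun_prop) _ _),
      ← intervalIntegral.integral_add (Continuous.intervalIntegrable (by fun_prop) _ _)
        (Continuous.intervalIntegrable (by fun_prop) _ _)]
    refine intervalIntegral.integral_congr fun t _ => ?_
    simp only [hm']
    simp only [hm]
    ring
  rw [hdd] at key
  have hz : ∀ t ∈ Set.Icc (0:ℝ) 1, deriv a₁ t - deriv a₂ t = 0 := by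
    intro t ht
    by_contra hne
    have := intervalIntegral.integral_pos (a := (0:ℝ)) (b := 1)
      (f := fun t => (deriv a₁ t - deriv a₂ t) ^ 2) one_pos
      (Continuous.continuousOn (by fun_prop)) (fun x _ => sq_nonneg _)
      ⟨t, ht, by positivity⟩
    linarith
  intro t ht
  have := constant_of_has_deriv_right_zero (f := fun t => a₁ t - a₂ t) (a := 0) (b := 1)
    (Continuous.continuousOn (by fun_prop)) (fun x hx => by
      have h := ((d₁ x).hasDerivAt.sub (d₂ x).hasDerivAt).hasDerivWithinAt (s := Set.Ici x)
      rwa [hz x ⟨hx.1, hx.2.le⟩] at h) t ht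
  simp only [ha₁0, ha₂0] at this
  linarith
end

section
/- Let κ ≥ 0 and λ > 0, and let b(t) = t be the risk-neutral unit strategy. Then a(t) = (1 + λκ/4) t − (λκ/4) t² is a unit trading strategy and is the best response to b: for every continuously differentiable unit trading strategy g, Cost_A(a, b) ≤ Cost_A(g, b). -/
open Real

theorem best_response_to_risk_neutral (κ lam : ℝ) (hκ : 0 ≤ κ) (hlam : 0 < lam)
    (a b : ℝ → ℝ) (hb : ∀ t : ℝ, b t = t)
    (ha : ∀ t : ℝ, a t = (1 + lam * κ / 4) * t - (lam * κ / 4) * t^2) :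
    a 0 = 0 ∧ a 1 = 1 ∧
      ∀ g : ℝ → ℝ, ContDiff ℝ 1 g → g 0 = 0 → g 1 = 1 →
        costA κ lam a b ≤ costA κ lam g b := by
  have a0 : a 0 = 0 := by rw [ha]; ring
  have a1 : a 1 = 1 := by rw [ha]; ring
  refine ⟨a0, a1, ?_⟩
  intro g hg g0 g1
  have hb1 : ∀ t, deriv b t = 1 := by
    intro t
    have : b = id := funext hb
    rw [this]; simp
  have haf : a = fun t => (1 + lam * κ / 4) * t - (lam * κ / 4) * t^2 := funext ha
  have had : ∀ t, HasDerivAt a ((1 + lam * κ / 4) - (lam * κ / 2) * t) t := by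
    intro t
    rw [haf]
    have h := ((hasDerivAt_id t).const_mul (1 + lam * κ / 4)).sub
      ((hasDerivAt_pow 2 t).const_mul (lam * κ / 4))
    exact h.congr_deriv (by push_cast; ring)
  have hac : Continuous a := by rw [haf]; fun_prop
  have hgc : Continuous g := hg.continuous
  have hgd : Continuous (deriv g) := hg.continuous_deriv le_rfl
  have hgD : ∀ t, HasDerivAt g (deriv g t) t := fun t =>
    ((hg.differentiable (by norm_num)) t).hasDerivAt
  have hF : ∀ t, HasDerivAt
      (fun t => (2 + lam * κ / 2 + lam) * (g t - a t) + κ / 2 * (g t * g t - a t * a t))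
      ((2 + lam * κ / 2 + lam) * (deriv g t - ((1 + lam * κ / 4) - (lam * κ / 2) * t))
        + κ / 2 * ((deriv g t * g t + g t * deriv g t)
          - (((1 + lam * κ / 4) - (lam * κ / 2) * t) * a t
            + a t * ((1 + lam * κ / 4) - (lam * κ / 2) * t)))) t := by
    intro t
    exact (((hgD t).sub (had t)).const_mul _).add
      ((((hgD t).mul (hgD t)).sub ((had t).mul (had t))).const_mul _)
  have hI := intervalIntegral.integral_eq_sub_of_hasDerivAt (a := 0) (b := 1)
    (fun t _ => hF t) (Continuous.intervalIntegrable (by fun_prop) _ _)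
  simp only [g0, g1, a0, a1] at hI
  have hbf : b = fun t => t := funext hb
  have hdiff : 0 ≤ costA κ lam g b - costA κ lam a b := by
    unfold costA
    simp only [hb1, hb, (had _).deriv]
    rw [← intervalIntegral.integral_sub (Continuous.intervalIntegrable (by fun_prop) _ _)
      (Continuous.intervalIntegrable (by fun_prop) _ _)]
    have hz : (0:ℝ) = _ := Eq.trans (by ring) hI.symm
    refine hz.trans_le ?_
    refine intervalIntegral.integral_mono_on zero_le_one
      (Continuous.intervalIntegrable (by fun_prop) _ _)
      (Continuous.intervalIntegrable (by fun_prop) _ _) (fun t _ => ?_)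
    · nlinarith [sq_nonneg (deriv g t - ((1 + lam * κ / 4) - (lam * κ / 2) * t))]
  linarith
end

section
/- Let κ ≥ 0, λ > 0, σ > 0, let b(t) = sinh(σt)/sinh(σ) be a risk-averse unit strategy, and define q_σ(t) = sinh(σt)/sinh(σ) + (κ/σ)·cosh(σt)/sinh(σ). Then a(t) = (λ/2)(q_σ(0) − q_σ(t)) + (1 + (λ/2)(q_σ(1) − q_σ(0))) t is a unit trading strategy and is the best response to b: for every continuously differentiable unit trading strategy g, Cost_A(a, b) ≤ Cost_A(g, b). -/
open Real

theorem best_response_to_risk_averse (κ lam σ : ℝ) (hκ : 0 ≤ κ) (hlam : 0 < lam)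
    (hσ : 0 < σ) (a b q : ℝ → ℝ)
    (hb : ∀ t : ℝ, b t = Real.sinh (σ * t) / Real.sinh σ)
    (hq : ∀ t : ℝ, q t = Real.sinh (σ * t) / Real.sinh σ
      + (κ / σ) * (Real.cosh (σ * t) / Real.sinh σ))
    (ha : ∀ t : ℝ, a t = (lam / 2) * (q 0 - q t)
      + (1 + (lam / 2) * (q 1 - q 0)) * t) :
    a 0 = 0 ∧ a 1 = 1 ∧
      ∀ g : ℝ → ℝ, ContDiff ℝ 1 g → g 0 = 0 → g 1 = 1 →
        costA κ lam a b ≤ costA κ lam g b := by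
  have hs : Real.sinh σ ≠ 0 := (Real.sinh_pos_iff.mpr hσ).ne'
  have hσ0 : σ ≠ 0 := hσ.ne'
  have ha0 : a 0 = 0 := by rw [ha]; ring
  have ha1 : a 1 = 1 := by rw [ha]; ring
  refine ⟨ha0, ha1, ?_⟩
  intro g hg hg0 hg1
  have hbC : ContDiff ℝ 1 b := by
    rw [funext hb]; fun_prop
  have hqC : ContDiff ℝ 1 q := by
    rw [funext hq]; fun_prop
  have haC : ContDiff ℝ 1 a := by
    rw [funext ha]; fun_prop
  have hbd : ∀ t, HasDerivAt b (deriv b t) t := fun t =>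
    (hbC.differentiable one_ne_zero t).hasDerivAt
  have hgd : ∀ t, HasDerivAt g (deriv g t) t := fun t =>
    (hg.differentiable one_ne_zero t).hasDerivAt
  have had : ∀ t, HasDerivAt a (deriv a t) t := fun t =>
    (haC.differentiable one_ne_zero t).hasDerivAt
  have cb := hbC.continuous_deriv le_rfl
  have cg := hg.continuous_deriv le_rfl
  have ca := haC.continuous_deriv le_rfl
  have cb0 := hbC.continuous
  have cg0 := hg.continuous
  have ca0 := haC.continuous
  have hqd : ∀ t, HasDerivAt q (deriv b t + κ * b t) t := by
    intro t
    have e : q = fun t => b t + (κ / σ) * (Real.cosh (σ * t) / Real.sinh σ) := by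
      funext t; rw [hq, hb]
    rw [e]
    have h1 : HasDerivAt (fun t : ℝ => σ * t) σ t := by
      simpa using (hasDerivAt_id t).const_mul σ
    have h2 := (h1.cosh.div_const (Real.sinh σ)).const_mul (κ / σ)
    refine HasDerivAt.congr_deriv ((hbd t).add h2) ?_
    rw [hb]; field_simp
  obtain ⟨c, hc⟩ : ∃ c, c = 1 + (lam / 2) * (q 1 - q 0) := ⟨_, rfl⟩
  have had' : ∀ t, deriv a t = -(lam / 2) * (deriv b t + κ * b t) + c := by
    intro t
    have e : a = fun t => (lam / 2) * (q 0 - q t) + c * t := by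
      funext t; rw [ha, hc]
    have h := (((hqd t).const_sub (q 0)).const_mul (lam / 2)).add
      ((hasDerivAt_id t).const_mul c)
    have h' : HasDerivAt a (lam / 2 * -(deriv b t + κ * b t) + c * 1) t := by
      rw [e]; exact h
    rw [h'.deriv]; ring
  have hF : ∫ t in (0:ℝ)..1, (2 * c * (deriv g t - deriv a t)
      + κ * (g t * deriv g t - a t * deriv a t)) = 0 := by
    rw [intervalIntegral.integral_eq_sub_of_hasDerivAt
      (f := fun t => 2 * c * (g t - a t) + κ / 2 * (g t * g t - a t * a t))]
    · rw [ha0, ha1, hg0, hg1]; ring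
    · intro t _
      refine HasDerivAt.congr_deriv ((((hgd t).sub (had t)).const_mul (2 * c)).add
        ((((hgd t).mul (hgd t)).sub ((had t).mul (had t))).const_mul (κ / 2))) ?_
      ring
    · exact Continuous.intervalIntegrable (by fun_prop) _ _
  have hsub : costA κ lam a b = ∫ t in (0:ℝ)..1,
      (((deriv a t + lam * deriv b t) * deriv a t + κ * (a t + lam * b t) * deriv a t)
      + (2 * c * (deriv g t - deriv a t)
      + κ * (g t * deriv g t - a t * deriv a t))) := by
    rw [intervalIntegral.integral_add, hF, add_zero, costA]
    · exact Continuous.intervalIntegrable (by fun_prop) _ _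
    · exact Continuous.intervalIntegrable (by fun_prop) _ _
  rw [hsub, costA]
  apply intervalIntegral.integral_mono_on zero_le_one
  · exact Continuous.intervalIntegrable (by fun_prop) _ _
  · exact Continuous.intervalIntegrable (by fun_prop) _ _
  · intro t _
    have hct : c = deriv a t + (lam / 2) * (deriv b t + κ * b t) := by
      rw [had' t]; ring
    rw [hct]
    nlinarith [sq_nonneg (deriv g t - deriv a t)]
end

section
/- Let κ ≥ 0, λ > 0, σ > 0, and let b(t) = (e^{−σt} − 1)/(e^{−σ} − 1) be an eager unit strategy. Define a(t) = e^{−σt} [ λ e^{σ}(σ − κ) − t e^{σt}((λ+2)σ − κλ) + e^{σ + σt}(−λσ + κλ(1 − t) + (λ+2)σt) ] / (2(e^{σ} − 1)σ). Then a is a unit trading strategy and is the best response to b: for every continuously differentiable unit trading strategy g, Cost_A(a, b) ≤ Cost_A(g, b). -/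
open Real

theorem best_response_to_eager (κ lam σ : ℝ) (hκ : 0 ≤ κ) (hlam : 0 < lam)
    (hσ : 0 < σ) (a b : ℝ → ℝ)
    (hb : ∀ t : ℝ, b t = (Real.exp (-σ * t) - 1) / (Real.exp (-σ) - 1))
    (ha : ∀ t : ℝ, a t =
      Real.exp (-σ * t) *
        (lam * Real.exp σ * (σ - κ)
          - t * Real.exp (σ * t) * ((lam + 2) * σ - κ * lam)
          + Real.exp (σ + σ * t) * (-(lam * σ) + κ * lam * (1 - t) + (lam + 2) * σ * t))
        / (2 * (Real.exp σ - 1) * σ)) :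
    a 0 = 0 ∧ a 1 = 1 ∧
      ∀ g : ℝ → ℝ, ContDiff ℝ 1 g → g 0 = 0 → g 1 = 1 →
        costA κ lam a b ≤ costA κ lam g b := by
  have hE : 1 < Real.exp σ := by simpa using hσ
  have hE1 : Real.exp σ - 1 ≠ 0 := by linarith
  have hE0 : Real.exp σ ≠ 0 := (Real.exp_pos σ).ne'
  obtain ⟨c, hc⟩ : ∃ c : ℝ, c = -(Real.exp σ / (Real.exp σ - 1)) := ⟨_, rfl⟩
  have hE2 : 1 - Real.exp σ ≠ 0 := by
    intro h
    linarith
  have hb' : b = fun t => c * (Real.exp (-σ * t) - 1) := by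
    funext t
    have h1 : (Real.exp (-σ) - 1)  = (1 - Real.exp σ) / Real.exp σ := by
      rw [Real.exp_neg]
      field_simp
    have h2 : c = Real.exp σ / (1 - Real.exp σ) := by
      rw [hc, ← div_neg]
      congr 1
      ring
    rw [hb, h1, h2]
    field_simp
  have ha' : a = fun t => -(c * lam * (σ - κ) / (2 * σ)) * (Real.exp (-σ * t) - 1)
      + ((lam + 2) * σ - κ * lam) / (2 * σ) * t := by
    funext t
    have h3 : Real.exp (-σ * t) = (Real.exp (σ * t))⁻¹ := by
      rw [← Real.exp_neg]
      congr 1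
      ring
    have h4 := (Real.exp_pos (σ * t)).ne'
    rw [ha, hc, Real.exp_add, h3]
    field_simp
    ring
  have hc1 : c * (Real.exp (-σ) - 1) = 1 := by
    rw [hc, Real.exp_neg]
    field_simp
    ring
  have ha0 : a 0 = 0 := by simp [ha']
  have ha1 : a 1 = 1 := by
    have h5 : a 1 = -((c * (Real.exp (-σ) - 1)) * lam * (σ - κ) / (2 * σ))
      + ((lam + 2) * σ - κ * lam) / (2 * σ) := by
      rw [ha']
      simp only [mul_one]
      ring
    rw [h5, hc1]
    field_simp
    ring
  refine ⟨ha0, ha1, ?_⟩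
  clear ha hb hc
  intro g hg hg0 hg1
  have hac : ContDiff ℝ 1 a := by rw [ha']; fun_prop
  have hbc : ContDiff ℝ 1 b := by rw [hb']; fun_prop
  have he : ∀ t : ℝ, HasDerivAt (fun t => Real.exp (-σ * t)) (Real.exp (-σ * t) * (-σ)) t := by
    intro t
    simpa using ((hasDerivAt_id t).const_mul (-σ)).exp
  have hdb : ∀ t, deriv b t = c * (Real.exp (-σ * t) * (-σ)) := by
    intro t
    rw [hb']
    exact (((he t).sub_const 1).const_mul c).deriv
  have hda : ∀ t, deriv a t = -(c * lam * (σ - κ) / (2 * σ)) * (Real.exp (-σ * t) * (-σ))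
      + ((lam + 2) * σ - κ * lam) / (2 * σ) := by
    intro t
    rw [ha']
    have := ((((he t).sub_const 1).const_mul (-(c * lam * (σ - κ) / (2 * σ)))).add
      ((hasDerivAt_id t).const_mul (((lam + 2) * σ - κ * lam) / (2 * σ)))).deriv
    rw [mul_one] at this
    exact this
  obtain ⟨K, hK⟩ : ∃ K : ℝ, ∀ t, 2 * deriv a t + lam * deriv b t + κ * lam * b t = K := by
    refine ⟨((lam + 2) * σ - κ * lam) / σ - κ * lam * c, fun t => ?_⟩
    rw [hda, hdb, hb']
    field_simp
    ring
  have cda := hac.continuous_deriv le_rfl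
  have cdb := hbc.continuous_deriv le_rfl
  have cdg := hg.continuous_deriv le_rfl
  have ca := hac.continuous
  have cb := hbc.continuous
  have cg := hg.continuous
  have dA : ∀ t, HasDerivAt a (deriv a t) t := fun t =>
    (hac.differentiable (by norm_num) t).hasDerivAt
  have dG : ∀ t, HasDerivAt g (deriv g t) t := fun t =>
    (hg.differentiable (by norm_num) t).hasDerivAt
  have hF : ∀ t, HasDerivAt (fun t => K * (g t - a t) + κ / 2 * (g t * g t - a t * a t))
      (K * (deriv g t - deriv a t) + κ * (g t * deriv g t - a t * deriv a t)) t := by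
    intro t
    have := (((dG t).sub (dA t)).const_mul K).add
      ((((dG t).mul (dG t)).sub ((dA t).mul (dA t))).const_mul (κ / 2))
    refine this.congr_deriv ?_
    ring
  have hint : ∫ t in (0:ℝ)..1,
      (K * (deriv g t - deriv a t) + κ * (g t * deriv g t - a t * deriv a t)) = 0 := by
    rw [intervalIntegral.integral_eq_sub_of_hasDerivAt (fun t _ => hF t)
      ((by fun_prop : Continuous _).intervalIntegrable _ _)]
    simp [ha0, ha1, hg0, hg1]
  unfold costA
  suffices key : (∫ t in (0:ℝ)..1, ((deriv a t + lam * deriv b t) * deriv a t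
      + κ * (a t + lam * b t) * deriv a t)) + (∫ t in (0:ℝ)..1,
      (K * (deriv g t - deriv a t) + κ * (g t * deriv g t - a t * deriv a t))) ≤
      ∫ t in (0:ℝ)..1, ((deriv g t + lam * deriv b t) * deriv g t
      + κ * (g t + lam * b t) * deriv g t) by
    rw [hint, add_zero] at key
    exact key
  rw [← intervalIntegral.integral_add
      ((by fun_prop : Continuous _).intervalIntegrable _ _)
      ((by fun_prop : Continuous _).intervalIntegrable _ _)]
  refine intervalIntegral.integral_mono_on zero_le_one
      ((by fun_prop : Continuous _).intervalIntegrable _ _)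
      ((by fun_prop : Continuous _).intervalIntegrable _ _) ?_
  intro t _
  rw [← hK t]
  nlinarith [sq_nonneg (deriv g t - deriv a t)]
end

section
/- Let κ > 0 and λ > 0, and define a_eq(t) = −(1 − e^{−κt/3})(−e^{κ/3}(e^{κ/3} + e^{2κ/3} + 1)(λ+1) + (λ−1)e^{κt/3} + (λ−1)e^{2κt/3} + (λ−1)e^{κt}) / (2(e^{κ} − 1)) and b_eq(t) = (1 − e^{−κt/3})(e^{κ/3}(e^{κ/3} + e^{2κ/3} + 1)(λ+1) + (λ−1)e^{κt/3} + (λ−1)e^{2κt/3} + (λ−1)e^{κt}) / (2(e^{κ} − 1)λ). Then a_eq(0) = 0, a_eq(1) = 1, b_eq(0) = 0, b_eq(1) = 1, and the pair satisfies the equilibrium equations a_eq''(t) = −(λ/2)(b_eq''(t) + κ b_eq'(t)) and b_eq''(t) = −(1/(2λ))(a_eq''(t) + κ a_eq'(t)) for all t ∈ [0,1]. -/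
open Real

lemma aux_deriv (k A B : ℝ) :
    deriv (fun t : ℝ => A * (1 - Real.exp (-k * t / 3)) + B * (Real.exp (k * t) - 1))
      = fun t => A * (k / 3) * Real.exp (-k * t / 3) + B * k * Real.exp (k * t) := by
  funext t
  have h1 : HasDerivAt (fun t : ℝ => -k * t / 3) (-k * 1 / 3) t :=
    ((hasDerivAt_id t).const_mul (-k)).div_const 3
  have h2 : HasDerivAt (fun t : ℝ => k * t) (k * 1) t := (hasDerivAt_id t).const_mul k
  have h := ((h1.exp.const_sub 1).const_mul A).add ((h2.exp.sub_const 1).const_mul B)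
  refine (HasDerivAt.deriv h).trans ?_
  ring

lemma aux_deriv2 (k A B t : ℝ) :
    deriv (fun t : ℝ => A * Real.exp (-k * t / 3) + B * Real.exp (k * t)) t
      = -(A * (k / 3)) * Real.exp (-k * t / 3) + B * k * Real.exp (k * t) := by
  have h1 : HasDerivAt (fun t : ℝ => -k * t / 3) (-k * 1 / 3) t :=
    ((hasDerivAt_id t).const_mul (-k)).div_const 3
  have h2 : HasDerivAt (fun t : ℝ => k * t) (k * 1) t := (hasDerivAt_id t).const_mul k
  have h := (h1.exp.const_mul A).add (h2.exp.const_mul B)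
  refine (HasDerivAt.deriv h).trans ?_
  ring

lemma aux_exp (k t : ℝ) : Real.exp (2 * k * t / 3) = Real.exp (k * t / 3) ^ 2 ∧
    Real.exp (k * t) = Real.exp (k * t / 3) ^ 3 ∧
    Real.exp (-k * t / 3) = (Real.exp (k * t / 3))⁻¹ := by
  refine ⟨?_, ?_, ?_⟩
  · rw [← Real.exp_nat_mul]; congr 1; push_cast; ring
  · rw [← Real.exp_nat_mul]; congr 1; push_cast; ring
  · rw [← Real.exp_neg]; congr 1; ring

theorem equilibrium_closed_form_satisfies_equations (κ lam : ℝ) (hκ : 0 < κ)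
    (hlam : 0 < lam) (aeq beq : ℝ → ℝ)
    (haeq : ∀ t : ℝ, aeq t =
      -((1 - Real.exp (-κ * t / 3)) *
          (-(Real.exp (κ/3) * (Real.exp (κ/3) + Real.exp (2*κ/3) + 1) * (lam + 1))
            + (lam - 1) * Real.exp (κ * t / 3)
            + (lam - 1) * Real.exp (2 * κ * t / 3)
            + (lam - 1) * Real.exp (κ * t)))
        / (2 * (Real.exp κ - 1)))
    (hbeq : ∀ t : ℝ, beq t =
      ((1 - Real.exp (-κ * t / 3)) *
          (Real.exp (κ/3) * (Real.exp (κ/3) + Real.exp (2*κ/3) + 1) * (lam + 1)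
            + (lam - 1) * Real.exp (κ * t / 3)
            + (lam - 1) * Real.exp (2 * κ * t / 3)
            + (lam - 1) * Real.exp (κ * t)))
        / (2 * (Real.exp κ - 1) * lam)) :
    aeq 0 = 0 ∧ aeq 1 = 1 ∧ beq 0 = 0 ∧ beq 1 = 1 ∧
      ∀ t ∈ Set.Icc (0:ℝ) 1,
        deriv (deriv aeq) t = -(lam/2) * (deriv (deriv beq) t + κ * deriv beq t) ∧
        deriv (deriv beq) t = -(1/(2*lam)) * (deriv (deriv aeq) t + κ * deriv aeq t) := by
  have hE : Real.exp κ - 1 ≠ 0 := by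
    have := Real.one_lt_exp_iff.mpr hκ
    linarith
  have hl : lam ≠ 0 := hlam.ne'
  obtain ⟨q2, q3, q1⟩ := aux_exp κ 1
  simp only [mul_one] at q2 q3 q1
  have hq := Real.exp_ne_zero (κ / 3)
  set C := Real.exp (κ/3) * (Real.exp (κ/3) + Real.exp (2*κ/3) + 1) with hC
  have hC1 : C * (1 - (Real.exp (κ / 3))⁻¹) = Real.exp κ - 1 := by
    rw [hC, q2, q3]; field_simp; ring
  have ha : aeq = fun t => (C * (lam + 1) / (2 * (Real.exp κ - 1))) *
      (1 - Real.exp (-κ * t / 3)) + (-(lam - 1) / (2 * (Real.exp κ - 1))) *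
      (Real.exp (κ * t) - 1) := by
    funext t
    obtain ⟨x2, x3, x1⟩ := aux_exp κ t
    have hx := Real.exp_ne_zero (κ * t / 3)
    rw [haeq, x2, x3, x1]
    field_simp
    ring
  have hb : beq = fun t => (C * (lam + 1) / (2 * (Real.exp κ - 1) * lam)) *
      (1 - Real.exp (-κ * t / 3)) + ((lam - 1) / (2 * (Real.exp κ - 1) * lam)) *
      (Real.exp (κ * t) - 1) := by
    funext t
    obtain ⟨x2, x3, x1⟩ := aux_exp κ t
    have hx := Real.exp_ne_zero (κ * t / 3)
    rw [hbeq, x2, x3, x1]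
    field_simp
    ring
  clear haeq hbeq
  clear_value C
  refine ⟨?_, ?_, ?_, ?_, ?_⟩
  · simp [ha]
  · simp only [ha, mul_one, q1]
    calc _ = ((lam + 1) * (C * (1 - (Real.exp (κ / 3))⁻¹)) - (lam - 1) * (Real.exp κ - 1))
          / (2 * (Real.exp κ - 1)) := by ring
      _ = 1 := by rw [hC1]; field_simp; ring
  · simp [hb]
  · simp only [hb, mul_one, q1]
    calc _ = ((lam + 1) * (C * (1 - (Real.exp (κ / 3))⁻¹)) + (lam - 1) * (Real.exp κ - 1))
          / (2 * (Real.exp κ - 1) * lam) := by ring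
      _ = 1 := by rw [hC1]; field_simp; ring
  · intro t _
    rw [ha, hb, aux_deriv, aux_deriv, aux_deriv2, aux_deriv2]
    constructor
    · field_simp
      ring
    · field_simp
      ring
end

section
/- Let κ > 0 and λ > 0, and define a_eq(t) = −(1 − e^{−κt/3})(−e^{κ/3}(e^{κ/3} + e^{2κ/3} + 1)(λ+1) + (λ−1)e^{κt/3} + (λ−1)e^{2κt/3} + (λ−1)e^{κt}) / (2(e^{κ} − 1)) and b_eq(t) = (1 − e^{−κt/3})(e^{κ/3}(e^{κ/3} + e^{2κ/3} + 1)(λ+1) + (λ−1)e^{κt/3} + (λ−1)e^{2κt/3} + (λ−1)e^{κt}) / (2(e^{κ} − 1)λ). Then (a_eq, b_eq) is a two-trader equilibrium: for every continuously differentiable unit trading strategy g, Cost_A(a_eq, b_eq) ≤ Cost_A(g, b_eq) and Cost_B(b_eq, a_eq) ≤ Cost_B(g, a_eq). -/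
open Real

/-- The total cost of trader B trading the `lam`-scaled strategy `b` in competition
with the unit strategy `a`, with market impact coefficient `κ`. -/
noncomputable def costB (κ lam : ℝ) (b a : ℝ → ℝ) : ℝ :=
  ∫ t in (0:ℝ)..1,
    ((deriv a t + lam * deriv b t) * (lam * deriv b t)
      + κ * (a t + lam * b t) * (lam * deriv b t))

/-- A first integral of the Euler-Lagrange equation gives optimality. -/
lemma best_response_core (κ C : ℝ) (a a' c c' g g' : ℝ → ℝ)
    (ha : ∀ t, HasDerivAt a (a' t) t)
    (hg : ∀ t, HasDerivAt g (g' t) t) (ha' : Continuous a') (hc : Continuous c)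
    (hc' : Continuous c') (hg' : Continuous g')
    (hEL : ∀ t, 2 * a' t + c' t + κ * c t = C)
    (h0 : g 0 = a 0) (h1 : g 1 = a 1) :
    (∫ t in (0:ℝ)..1, ((a' t + c' t) * a' t + κ * (a t + c t) * a' t)) ≤
      ∫ t in (0:ℝ)..1, ((g' t + c' t) * g' t + κ * (g t + c t) * g' t) := by
  have hac : Continuous a := continuous_iff_continuousAt.2 fun t => (ha t).continuousAt
  have hgc : Continuous g := continuous_iff_continuousAt.2 fun t => (hg t).continuousAt
  have hF : ∀ t, HasDerivAt (fun t => C * (g t - a t) + κ / 2 * (g t * g t - a t * a t))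
      (C * (g' t - a' t) + κ / 2 * ((g' t * g t + g t * g' t) - (a' t * a t + a t * a' t))) t :=
    fun t => (((hg t).sub (ha t)).const_mul C).add
      ((((hg t).mul (hg t)).sub ((ha t).mul (ha t))).const_mul (κ / 2))
  have hint := intervalIntegral.integral_eq_sub_of_hasDerivAt (a := 0) (b := 1)
    (fun t _ => hF t) ((by fun_prop : Continuous _).intervalIntegrable _ _)
  rw [h0, h1] at hint
  rw [← sub_nonneg, ← intervalIntegral.integral_sub
    ((by fun_prop : Continuous _).intervalIntegrable _ _)
    ((by fun_prop : Continuous _).intervalIntegrable _ _)]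
  have key : (∫ t in (0:ℝ)..1, ((g' t + c' t) * g' t + κ * (g t + c t) * g' t
      - ((a' t + c' t) * a' t + κ * (a t + c t) * a' t))) =
      (∫ t in (0:ℝ)..1, (g' t - a' t) ^ 2) + ∫ t in (0:ℝ)..1, (C * (g' t - a' t)
        + κ / 2 * ((g' t * g t + g t * g' t) - (a' t * a t + a t * a' t))) := by
    rw [← intervalIntegral.integral_add
      ((by fun_prop : Continuous _).intervalIntegrable _ _)
      ((by fun_prop : Continuous _).intervalIntegrable _ _)]
    congr 1
    funext t
    rw [← hEL t]
    ring
  rw [key, hint]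
  have : 0 ≤ ∫ t in (0:ℝ)..1, (g' t - a' t) ^ 2 :=
    intervalIntegral.integral_nonneg zero_le_one fun t _ => sq_nonneg _
  linarith

lemma closed_form_hasDerivAt (κ p q t : ℝ) :
    HasDerivAt (fun t => p * (1 - exp (-κ * t / 3)) + q * (exp (κ * t) - 1))
      (p * (κ / 3) * exp (-κ * t / 3) + q * κ * exp (κ * t)) t := by
  have h1 : HasDerivAt (fun t : ℝ => -κ * t / 3) (-κ * 1 / 3) t :=
    ((hasDerivAt_id t).const_mul (-κ)).div_const 3
  have h2 : HasDerivAt (fun t : ℝ => κ * t) (κ * 1) t := (hasDerivAt_id t).const_mul κ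
  refine (((h1.exp.const_sub 1).const_mul p).add
    ((h2.exp.sub_const 1).const_mul q)).congr_deriv ?_
  ring

lemma exp_telescope (κ t : ℝ) :
    (1 - exp (-κ * t / 3)) * (exp (κ * t / 3) + exp (2 * κ * t / 3) + exp (κ * t))
      = exp (κ * t) - 1 := by
  have e1 : exp (2 * κ * t / 3) = exp (κ * t / 3) ^ 2 := by
    rw [← exp_nat_mul]; congr 1; push_cast; ring
  have e2 : exp (κ * t) = exp (κ * t / 3) ^ 3 := by
    rw [← exp_nat_mul]; congr 1; push_cast; ring
  have e3 : exp (-κ * t / 3) = (exp (κ * t / 3))⁻¹ := by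
    rw [← exp_neg]; congr 1; ring
  have := exp_pos (κ * t / 3)
  rw [e1, e2, e3]
  field_simp
  ring

theorem closed_form_is_two_trader_equilibrium (κ lam : ℝ) (hκ : 0 < κ)
    (hlam : 0 < lam) (aeq beq : ℝ → ℝ)
    (haeq : ∀ t : ℝ, aeq t =
      -((1 - Real.exp (-κ * t / 3)) *
          (-(Real.exp (κ/3) * (Real.exp (κ/3) + Real.exp (2*κ/3) + 1) * (lam + 1))
            + (lam - 1) * Real.exp (κ * t / 3)
            + (lam - 1) * Real.exp (2 * κ * t / 3)
            + (lam - 1) * Real.exp (κ * t)))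
        / (2 * (Real.exp κ - 1)))
    (hbeq : ∀ t : ℝ, beq t =
      ((1 - Real.exp (-κ * t / 3)) *
          (Real.exp (κ/3) * (Real.exp (κ/3) + Real.exp (2*κ/3) + 1) * (lam + 1)
            + (lam - 1) * Real.exp (κ * t / 3)
            + (lam - 1) * Real.exp (2 * κ * t / 3)
            + (lam - 1) * Real.exp (κ * t)))
        / (2 * (Real.exp κ - 1) * lam)) :
    ∀ g : ℝ → ℝ, ContDiff ℝ 1 g → g 0 = 0 → g 1 = 1 →
      costA κ lam aeq beq ≤ costA κ lam g beq ∧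
      costB κ lam beq aeq ≤ costB κ lam g aeq := by
  intro g hg hg0 hg1
  have hD : 0 < exp κ - 1 := by
    have := one_lt_exp_iff.2 hκ
    linarith
  obtain ⟨P, hP⟩ : ∃ P, P = exp (κ/3) * (exp (κ/3) + exp (2*κ/3) + 1) := ⟨_, rfl⟩
  have hP1 : P * (1 - exp (-κ * 1 / 3)) = exp κ - 1 := by
    have h := exp_telescope κ 1
    have e2 : exp (κ * 1) = exp (κ / 3) * exp (2 * κ / 3) := by
      rw [← exp_add]; congr 1; ring
    have e1 : exp (2 * κ / 3) = exp (κ / 3) * exp (κ / 3) := by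
      rw [← exp_add]; congr 1; ring
    have e3 : exp κ = exp (κ * 1) := by rw [mul_one]
    rw [e3, ← h, hP, e2, mul_one, mul_one, mul_one, e1]
    ring
  obtain ⟨p, hp⟩ : ∃ p, p = P * (lam + 1) / (2 * (exp κ - 1)) := ⟨_, rfl⟩
  obtain ⟨q, hq⟩ : ∃ q, q = (lam - 1) / (2 * (exp κ - 1)) := ⟨_, rfl⟩
  have hA : ∀ t, aeq t = p * (1 - exp (-κ * t / 3)) + (-q) * (exp (κ * t) - 1) := by
    intro t
    rw [haeq, ← exp_telescope, ← hP, hp, hq]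
    field_simp
    ring
  have hB : ∀ t, lam * beq t = p * (1 - exp (-κ * t / 3)) + q * (exp (κ * t) - 1) := by
    intro t
    rw [hbeq, ← exp_telescope, ← hP, hp, hq]
    field_simp
    ring
  have dA : ∀ t, HasDerivAt aeq
      (p * (κ / 3) * exp (-κ * t / 3) + (-q) * κ * exp (κ * t)) t := by
    rw [funext hA]
    exact closed_form_hasDerivAt κ p (-q)
  have dB : ∀ t, HasDerivAt (fun t => lam * beq t)
      (p * (κ / 3) * exp (-κ * t / 3) + q * κ * exp (κ * t)) t := by
    rw [funext hB]
    exact closed_form_hasDerivAt κ p q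
  have cA : Continuous aeq := by rw [funext hA]; fun_prop
  have cB : Continuous (fun t => lam * beq t) := by rw [funext hB]; fun_prop
  have dA' : ∀ t, deriv aeq t = p * (κ / 3) * exp (-κ * t / 3) + (-q) * κ * exp (κ * t) :=
    fun t => (dA t).deriv
  have dB' : ∀ t, lam * deriv beq t = p * (κ / 3) * exp (-κ * t / 3) + q * κ * exp (κ * t) := by
    intro t
    rw [← (dB t).deriv, deriv_const_mul_field]
  have dg : ∀ t, HasDerivAt g (deriv g t) t := fun t =>
    (hg.differentiable one_ne_zero t).hasDerivAt
  have cg : Continuous (deriv g) := hg.continuous_deriv le_rfl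
  have hA0 : aeq 0 = 0 := by rw [hA]; simp
  have hB0 : lam * beq 0 = 0 := by rw [hB]; simp
  have hp1 : p * (1 - exp (-κ * 1 / 3)) = (lam + 1) / 2 := by
    have : p * (1 - exp (-κ * 1 / 3))
        = (lam + 1) * (P * (1 - exp (-κ * 1 / 3))) / (2 * (exp κ - 1)) := by
      rw [hp]; ring
    rw [this, hP1]
    field_simp
  have hq1 : q * (exp (κ * 1) - 1) = (lam - 1) / 2 := by
    rw [hq, mul_one]
    field_simp
  have hA1 : aeq 1 = 1 := by rw [hA]; linarith
  have hB1 : lam * beq 1 = lam := by rw [hB]; linarith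
  constructor
  · unfold costA
    simp only [dA', dB']
    refine best_response_core κ (κ * (p - q)) aeq _ (fun t => lam * beq t)
      (fun t => p * (κ / 3) * exp (-κ * t / 3) + q * κ * exp (κ * t)) g (deriv g)
      dA dg (by fun_prop) cB (by fun_prop) cg ?_ (by rw [hg0, hA0]) (by rw [hg1, hA1])
    intro t
    simp only [hB]
    ring
  · have h := best_response_core κ (κ * (p + q)) (fun t => lam * beq t) _ aeq
      (fun t => p * (κ / 3) * exp (-κ * t / 3) + (-q) * κ * exp (κ * t))
      (fun t => lam * g t) (fun t => lam * deriv g t)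
      dB (fun t => (dg t).const_mul lam) (by fun_prop) cA (by fun_prop) (by fun_prop) ?_
      (by simp only [hg0, hB0, mul_zero]) (by simp only [hg1, hB1, mul_one])
    · unfold costB
      simp only [dA', dB']
      convert h using 1
      · congr 1
        funext t
        ring
      · congr 1
        funext t
        ring
    · intro t
      simp only [hA]
      ring
end
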